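/- arXiv:1812.11224 — 6 statements merged into one kernel-verified Lean document; each statement's English description precedes it below -/
import Mathlib

section
/- The Magic Lemma (Benjamini–Schramm): There exists a universal constant A > 0 such that for every δ ∈ (0, 1/2), every finite set C ⊆ ℝ² with at least two points, and every integer s ≥ 2, the number of (δ,s)-supported points of C is at most A·|C|·δ^{−2}·log(δ^{−1}) / s. -/
open scoped Classical

/-!
The Magic Lemma of Benjamini and Schramm.

The plane `ℝ²` is modelled as `ℂ` (with its Euclidean distance).  For a finite
set `C` of points (with at least two points) and `w ∈ C`, the isolation radius
`ρ_w` is the minimal distance from `w` to another point of `C`.  Given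
`δ ∈ (0,1)` and an integer `s ≥ 2`, the point `w` is `(δ,s)`-supported if for
every `p ∈ ℂ` there are at least `s` points of `C` in the closed disc of
radius `δ⁻¹ ρ_w` around `w` and outside the open disc of radius `δ ρ_w`
around `p`.
-/

/-- The isolation radius of a point `w` of the finite set `C`. -/
noncomputable def isolationRadius (C : Finset ℂ) (w : ℂ) : ℝ :=
  sInf {d : ℝ | ∃ v ∈ C, v ≠ w ∧ d = dist v w}

/-- `w` is `(δ,s)`-supported in `C`. -/
def IsSupported (C : Finset ℂ) (δ : ℝ) (s : ℕ) (w : ℂ) : Prop :=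
  ∀ p : ℂ, s ≤ (C.filter (fun v =>
    dist v w ≤ δ⁻¹ * isolationRadius C w ∧
    δ * isolationRadius C w ≤ dist v p)).card

/-- Truncated mass of a cell. -/
def capMass (s m : ℕ) : ℕ := min (2 * m) s

theorem capMass_sum_ge {ι : Type*} (s : ℕ) (P : Finset ι) (m : ι → ℕ) :
    capMass s (∑ p ∈ P, m p) ≤ ∑ p ∈ P, capMass s (m p) := by
  induction P using Finset.induction_on with
  | empty => simp [capMass]
  | insert a P ha ih =>
    rw [Finset.sum_insert ha, Finset.sum_insert ha]
    unfold capMass at *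
    omega

theorem capMass_sum_supp {ι : Type*} (s : ℕ) (P : Finset ι) (m : ι → ℕ)
    (hne : P.Nonempty)
    (h : ∀ p ∈ P, s + m p ≤ ∑ p ∈ P, m p) :
    capMass s (∑ p ∈ P, m p) + s ≤ ∑ p ∈ P, capMass s (m p) := by
  by_cases hb : ∃ p ∈ P, s ≤ 2 * m p
  · obtain ⟨p, hp, hs⟩ := hb
    have h1 := capMass_sum_ge s (P.erase p) m
    have h2 := Finset.add_sum_erase P m hp
    have h3 := Finset.add_sum_erase P (fun p => capMass s (m p)) hp
    have h4 := h p hp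
    have h5 : capMass s (m p) = s := by unfold capMass; omega
    rw [← h3, h5]
    have h6 : capMass s (∑ p ∈ P.erase p, m p) = s := by unfold capMass; omega
    have h7 : capMass s (∑ p ∈ P, m p) ≤ s := by unfold capMass; omega
    omega
  · push Not at hb
    have h1 : ∑ p ∈ P, capMass s (m p) = 2 * ∑ p ∈ P, m p := by
      rw [Finset.mul_sum]
      refine Finset.sum_congr rfl fun p hp => ?_
      have := hb p hp
      unfold capMass; omega
    obtain ⟨p, hp⟩ := hne
    have h2 := h p hp
    rw [h1]
    unfold capMass; omega

/-- Potential of a partition of `C` into the fibres of `f`. -/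
noncomputable def potential {α ι : Type*} [DecidableEq ι] (C : Finset α) (s : ℕ) (f : α → ι) : ℕ :=
  ∑ p ∈ C.image f, capMass s (C.filter (fun v => f v = p)).card

/-- Supported cells of the coarse partition `g` relative to the fine partition `f`. -/
noncomputable def suppCells {α ι : Type*} [DecidableEq ι] (C : Finset α) (s : ℕ) (f g : α → ι) : Finset ι :=
  (C.image g).filter (fun q => ∀ p, s ≤ (C.filter (fun v => g v = q ∧ f v ≠ p)).card)

theorem potential_le {α ι : Type*} [DecidableEq ι] (C : Finset α) (s : ℕ) (f : α → ι) :
    potential C s f ≤ 2 * C.card := by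
  unfold potential
  rw [Finset.card_eq_sum_card_image f C, Finset.mul_sum]
  exact Finset.sum_le_sum fun p _ => min_le_left _ _

theorem potential_step {α ι : Type*} [DecidableEq ι] (C : Finset α) (s : ℕ) (f g : α → ι) (φ : ι → ι)
    (hφ : ∀ v, g v = φ (f v)) :
    potential C s g + s * (suppCells C s f g).card ≤ potential C s f := by
  have e1 : potential C s f = ∑ q ∈ C.image g, ∑ p ∈ (C.image f).filter (fun p => φ p = q),
      capMass s (C.filter (fun v => f v = p)).card := by
    unfold potential
    symm
    apply Finset.sum_fiberwise_of_maps_to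
    intro p hp
    obtain ⟨v, hv, rfl⟩ := Finset.mem_image.1 hp
    exact Finset.mem_image.2 ⟨v, hv, hφ v⟩
  have e2 : s * (suppCells C s f g).card = ∑ q ∈ C.image g,
      if (∀ p, s ≤ (C.filter (fun v => g v = q ∧ f v ≠ p)).card) then s else 0 := by
    unfold suppCells
    rw [← Finset.sum_filter, Finset.sum_const, smul_eq_mul, mul_comm]
  rw [e1, e2]
  unfold potential
  rw [← Finset.sum_add_distrib]
  refine Finset.sum_le_sum fun q hq => ?_
  have hm : (C.filter (fun v => g v = q)).card =
      ∑ p ∈ (C.image f).filter (fun p => φ p = q), (C.filter (fun v => f v = p)).card := by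
    rw [Finset.card_eq_sum_card_fiberwise (f := f)
      (t := (C.image f).filter (fun p => φ p = q))]
    · refine Finset.sum_congr rfl fun p hp => ?_
      congr 1
      ext v
      simp only [Finset.mem_filter] at hp ⊢
      constructor
      · rintro ⟨⟨a, b⟩, c⟩; exact ⟨a, c⟩
      · rintro ⟨a, c⟩; exact ⟨⟨a, by rw [hφ, c, hp.2]⟩, c⟩
    · intro v hv
      simp only [Finset.coe_filter, Set.mem_ofPred_eq, Finset.mem_image] at hv ⊢
      exact ⟨⟨v, hv.1, rfl⟩, by rw [← hφ, hv.2]⟩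
  rw [hm]
  split_ifs with h
  · apply capMass_sum_supp
    · obtain ⟨v, hv, rfl⟩ := Finset.mem_image.1 hq
      exact ⟨f v, Finset.mem_filter.2 ⟨Finset.mem_image_of_mem _ hv, (hφ v).symm⟩⟩
    · intro p hp
      rw [← hm]
      have h1 := h p
      have h2 := Finset.card_filter_add_card_filter_not (s := C.filter (fun v => g v = q))
        (fun v => f v = p)
      rw [Finset.filter_filter, Finset.filter_filter] at h2
      have h3 : C.filter (fun v => g v = q ∧ f v = p) = C.filter (fun v => f v = p) := by
        ext v
        simp only [Finset.mem_filter] at hp ⊢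
        constructor
        · rintro ⟨a, b, c⟩; exact ⟨a, c⟩
        · rintro ⟨a, c⟩; exact ⟨a, by rw [hφ, c, hp.2], c⟩
      rw [h3] at h2
      simp only [ne_eq] at h1
      omega
  · simpa using capMass_sum_ge s _ _

theorem suppCells_sum {α ι : Type*} [DecidableEq ι] (C : Finset α) (s L M : ℕ) (f : ℕ → α → ι) (φ : ι → ι)
    (hφ : ∀ k v, f (k + 1) v = φ (f k v)) :
    s * ∑ k ∈ Finset.range M, (suppCells C s (f k) (f (L + k))).card ≤ 2 * L * C.card := by
  have hit : ∀ k j v, f (j + k) v = φ^[j] (f k v) := by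
    intro k j v
    induction j with
    | zero => simp
    | succ j ih =>
      rw [Function.iterate_succ_apply', ← ih, ← hφ]
      congr 1
      omega
  have h1 : ∑ k ∈ Finset.range M, potential C s (f (L + k)) +
      s * ∑ k ∈ Finset.range M, (suppCells C s (f k) (f (L + k))).card ≤
      ∑ k ∈ Finset.range M, potential C s (f k) := by
    rw [Finset.mul_sum, ← Finset.sum_add_distrib]
    exact Finset.sum_le_sum fun k _ => potential_step C s _ _ _ (hit k L)
  have h2 : ∑ k ∈ Finset.range M, potential C s (f k) ≤
      ∑ k ∈ Finset.range (L + M), potential C s (f k) :=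
    Finset.sum_le_sum_of_subset (Finset.range_mono (by omega))
  rw [Finset.sum_range_add] at h2
  have h3 : ∑ k ∈ Finset.range L, potential C s (f k) ≤ ∑ k ∈ Finset.range L, 2 * C.card :=
    Finset.sum_le_sum fun k _ => potential_le C s _
  rw [Finset.sum_const, Finset.card_range, smul_eq_mul] at h3
  have : L * (2 * C.card) = 2 * L * C.card := by ring
  omega

/-- The numerical shift parameter. -/
def bz (b : Bool) : ℤ := if b then 1 else 0

/-- Rescaled and shifted coordinate. -/
noncomputable def crd (b : Bool) (n : ℤ) (x : ℝ) : ℝ := x / 3 ^ n + bz b / 2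

theorem floor_crd_succ (b : Bool) (n : ℤ) (x : ℝ) :
    ⌊crd b (n + 1) x⌋ = (⌊crd b n x⌋ + bz b) / 3 := by
  have h : crd b (n + 1) x = (crd b n x + bz b) / (3 : ℕ) := by
    unfold crd
    rw [zpow_add_one₀ (by norm_num)]
    have : (3 : ℝ) ^ n ≠ 0 := by positivity
    field_simp
    push_cast
    ring
  rw [h, Int.floor_div_natCast, Int.floor_add_intCast]
  rfl

/-- The cell containing `v`. -/
noncomputable def cell (t : Bool × Bool) (n : ℤ) (v : ℂ) : ℤ × ℤ :=
  (⌊crd t.1 n v.re⌋, ⌊crd t.2 n v.im⌋)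

theorem cell_succ (t : Bool × Bool) (n : ℤ) (v : ℂ) :
    cell t (n + 1) v = (fun q : ℤ × ℤ => ((q.1 + bz t.1) / 3, (q.2 + bz t.2) / 3))
      (cell t n v) := by
  simp only [cell, floor_crd_succ]

theorem exists_shift (n : ℤ) (x : ℝ) :
    ∃ b, ∀ y : ℝ, 4 * |y - x| < 3 ^ n → ⌊crd b n y⌋ = ⌊crd b n x⌋ := by
  have h3 : (0 : ℝ) < 3 ^ n := by positivity
  have key : ∃ b : Bool, ∃ z : ℤ, (z : ℝ) + 1 / 4 ≤ crd b n x ∧ crd b n x ≤ z + 3 / 4 := by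
    set u := x / 3 ^ n with hu
    have a1 := Int.floor_le u
    have a2 := Int.lt_floor_add_one u
    by_cases c1 : u < ⌊u⌋ + 1 / 4
    · refine ⟨true, ⌊u⌋, ?_⟩
      simp only [crd, bz, ← hu]; norm_num; constructor <;> linarith
    · by_cases c2 : u ≤ ⌊u⌋ + 3 / 4
      · refine ⟨false, ⌊u⌋, ?_⟩
        simp only [crd, bz, ← hu]; norm_num; constructor <;> linarith
      · refine ⟨true, ⌊u⌋ + 1, ?_⟩
        simp only [crd, bz, ← hu]; norm_num; constructor <;> linarith
  obtain ⟨b, z, k1, k2⟩ := key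
  refine ⟨b, fun y hy => ?_⟩
  have e : crd b n y - crd b n x = (y - x) / 3 ^ n := by unfold crd; ring
  have ha : |crd b n y - crd b n x| < 1 / 4 := by
    rw [e, abs_div, abs_of_pos h3, div_lt_iff₀ h3]; linarith
  rw [abs_lt] at ha
  have : ⌊crd b n x⌋ = z := by rw [Int.floor_eq_iff]; constructor <;> linarith
  rw [this, Int.floor_eq_iff]; constructor <;> linarith [ha.1, ha.2]

theorem crd_close (b : Bool) (n : ℤ) (x y ε : ℝ) (h : |crd b n x - crd b n y| < ε) :
    |x - y| < ε * 3 ^ n := by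
  have h3 : (0 : ℝ) < 3 ^ n := by positivity
  have e : crd b n x - crd b n y = (x - y) / 3 ^ n := by unfold crd; ring
  rwa [e, abs_div, abs_of_pos h3, div_lt_iff₀ h3] at h

theorem dist_lt_of_coords (v w : ℂ) (r : ℝ) (h1 : |v.re - w.re| < r) (h2 : |v.im - w.im| < r) :
    dist v w < 2 * r := by
  rw [Complex.dist_eq]
  have := Complex.norm_le_abs_re_add_abs_im (v - w)
  simp only [Complex.sub_re, Complex.sub_im] at this
  linarith

theorem cell_dist (t : Bool × Bool) (n : ℤ) (v w : ℂ) (h : cell t n v = cell t n w) :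
    dist v w < 2 * 3 ^ n := by
  simp only [cell, Prod.mk.injEq] at h
  apply dist_lt_of_coords
  · simpa using crd_close _ _ _ _ _ (Int.abs_sub_lt_one_of_floor_eq_floor h.1)
  · simpa using crd_close _ _ _ _ _ (Int.abs_sub_lt_one_of_floor_eq_floor h.2)

theorem isolationRadius_le (C : Finset ℂ) (v w : ℂ) (hv : v ∈ C) (h : v ≠ w) :
    isolationRadius C w ≤ dist v w := by
  apply csInf_le
  · exact ⟨0, by rintro d ⟨v, _, _, rfl⟩; exact dist_nonneg⟩
  · exact ⟨v, hv, h, rfl⟩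

theorem isolationRadius_pos (C : Finset ℂ) (hC : 2 ≤ C.card) (w : ℂ) (hw : w ∈ C) :
    0 < isolationRadius C w := by
  have hfin : {d : ℝ | ∃ v ∈ C, v ≠ w ∧ d = dist v w}.Finite := by
    refine (C.image (fun v => dist v w)).finite_toSet.subset ?_
    rintro d ⟨v, hv, _, rfl⟩
    exact Finset.mem_coe.2 (Finset.mem_image_of_mem _ hv)
  have hne : {d : ℝ | ∃ v ∈ C, v ≠ w ∧ d = dist v w}.Nonempty := by
    obtain ⟨v, hv, hvw⟩ := Finset.exists_mem_ne (by omega : 1 < C.card) w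
    exact ⟨_, v, hv, hvw, rfl⟩
  obtain ⟨v, _, hvw, he⟩ := hne.csInf_mem hfin
  unfold isolationRadius
  rw [he]
  exact dist_pos.2 hvw

/-- Every supported point lies in a supported cell of comparable size. -/
theorem exists_cell (δ : ℝ) (hδ : 0 < δ) (C : Finset ℂ) (hC : 2 ≤ C.card) (s L : ℕ)
    (hL : 24 * δ⁻¹ ^ 2 ≤ 3 ^ L) (w : ℂ) (hw : w ∈ C) (hs : IsSupported C δ s w) :
    ∃ (t : Bool × Bool) (n : ℤ), cell t n w ∈ suppCells C s (cell t (n - L)) (cell t n) ∧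
      δ * 3 ^ n ≤ 12 * isolationRadius C w := by
  have hρ := isolationRadius_pos C hC w hw
  set ρ := isolationRadius C w with hρd
  have hr : 0 < 4 * (δ⁻¹ * ρ) := by positivity
  obtain ⟨m, hm1, hm2⟩ := exists_mem_Ico_zpow hr (by norm_num : (1 : ℝ) < 3)
  obtain ⟨b1, hb1⟩ := exists_shift (m + 1) w.re
  obtain ⟨b2, hb2⟩ := exists_shift (m + 1) w.im
  have hup : (3 : ℝ) ^ (m + 1) ≤ 12 * (δ⁻¹ * ρ) := by
    rw [zpow_add_one₀ (by norm_num)]; linarith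
  have hup' : δ * 3 ^ (m + 1) ≤ 12 * ρ := by
    calc δ * 3 ^ (m + 1) ≤ δ * (12 * (δ⁻¹ * ρ)) := by gcongr
      _ = 12 * ρ := by field_simp
  refine ⟨(b1, b2), m + 1, ?_, hup'⟩
  refine Finset.mem_filter.2 ⟨Finset.mem_image_of_mem _ hw, fun p => ?_⟩
  have hsmall : 2 * (3 : ℝ) ^ (m + 1 - (L : ℤ)) ≤ δ * ρ := by
    rw [zpow_sub₀ (by norm_num), zpow_natCast, mul_div_assoc', div_le_iff₀ (by positivity)]
    calc 2 * (3 : ℝ) ^ (m + 1) ≤ 2 * (12 * (δ⁻¹ * ρ)) := by gcongr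
      _ = δ * ρ * (24 * δ⁻¹ ^ 2) := by field_simp; ring
      _ ≤ _ := by gcongr
  have hin : ∀ v, dist v w ≤ δ⁻¹ * ρ → cell (b1, b2) (m + 1) v = cell (b1, b2) (m + 1) w := by
    intro v hv
    rw [Complex.dist_eq] at hv
    have q1 := Complex.abs_re_le_norm (v - w)
    have q2 := Complex.abs_im_le_norm (v - w)
    simp only [Complex.sub_re, Complex.sub_im] at q1 q2
    simp only [cell]
    rw [hb1 v.re (by linarith), hb2 v.im (by linarith)]
  by_cases hp : ∃ v0, cell (b1, b2) (m + 1 - L) v0 = p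
  · obtain ⟨v0, hv0⟩ := hp
    refine (hs v0).trans (Finset.card_le_card ?_)
    intro v hv
    obtain ⟨c1, c2, c3⟩ := Finset.mem_filter.1 hv
    refine Finset.mem_filter.2 ⟨c1, hin v c2, fun he => ?_⟩
    have := cell_dist _ _ v v0 (he.trans hv0.symm)
    linarith
  · refine (hs w).trans (Finset.card_le_card ?_)
    intro v hv
    obtain ⟨c1, c2, c3⟩ := Finset.mem_filter.1 hv
    exact Finset.mem_filter.2 ⟨c1, hin v c2, fun he => hp ⟨v, he⟩⟩

/-- Separated points in one cell. -/
theorem card_in_cell (δ : ℝ) (C S : Finset ℂ) (hSC : S ⊆ C) (t : Bool × Bool)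
    (n : ℤ) (q : ℤ × ℤ) (K : ℕ) (hK : 24 ≤ δ * K)
    (h : ∀ w ∈ S, cell t n w = q ∧ δ * 3 ^ n ≤ 12 * isolationRadius C w) :
    S.card ≤ K ^ 2 := by
  have hK0 : (0 : ℝ) < K := by
    rcases Nat.eq_zero_or_pos K with h0 | h0
    · subst h0; norm_num at hK
    · exact_mod_cast h0
  have h3 : (0 : ℝ) < 3 ^ n := by positivity
  let F : ℂ → ℤ × ℤ := fun w =>
    (⌊(K : ℝ) * Int.fract (crd t.1 n w.re)⌋, ⌊(K : ℝ) * Int.fract (crd t.2 n w.im)⌋)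
  have hr : ∀ x : ℝ, ⌊(K : ℝ) * Int.fract x⌋ ∈ Finset.Ico (0 : ℤ) K := by
    intro x
    have a1 := Int.fract_nonneg x
    have a2 := Int.fract_lt_one x
    rw [Finset.mem_Ico, Int.floor_nonneg, Int.floor_lt]
    push_cast
    exact ⟨by positivity, by nlinarith⟩
  have hclose : ∀ (b : Bool) (x y : ℝ), ⌊crd b n x⌋ = ⌊crd b n y⌋ →
      ⌊(K : ℝ) * Int.fract (crd b n x)⌋ = ⌊(K : ℝ) * Int.fract (crd b n y)⌋ →
      |x - y| < 1 / K * 3 ^ n := by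
    intro b x y e1 e2
    apply crd_close b
    have := Int.abs_sub_lt_one_of_floor_eq_floor e2
    rw [← mul_sub, abs_mul, abs_of_pos hK0] at this
    rw [lt_div_iff₀ hK0, mul_comm]
    have e3 : Int.fract (crd b n x) - Int.fract (crd b n y) = crd b n x - crd b n y := by
      rw [Int.fract, Int.fract, e1]; ring
    rwa [e3] at this
  have hc : ((Finset.Ico (0 : ℤ) K) ×ˢ (Finset.Ico (0 : ℤ) K)).card = K ^ 2 := by
    simp [Finset.card_product, sq]
  rw [← hc]
  refine Finset.card_le_card_of_injOn F ?_ ?_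
  · intro w _
    exact Finset.mem_coe.2 (Finset.mem_product.2 ⟨hr _, hr _⟩)
  · intro v hv w hw e
    by_contra hne
    have hv' := h v hv
    have hw' := h w hw
    have e1 := hv'.1.trans hw'.1.symm
    simp only [cell, Prod.mk.injEq] at e1
    simp only [F, Prod.mk.injEq] at e
    have d1 := dist_lt_of_coords v w _ (hclose _ _ _ e1.1 e.1) (hclose _ _ _ e1.2 e.2)
    have d2 := isolationRadius_le C v w (hSC hv) hne
    have d3 : 12 * (2 * (1 / K * (3 : ℝ) ^ n)) ≤ δ * 3 ^ n := by
      have : 12 * (2 * (1 / K * (3 : ℝ) ^ n)) = 24 * 3 ^ n / K := by ring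
      rw [this, div_le_iff₀ hK0]
      nlinarith
    linarith [hw'.2]

theorem count_main (δ : ℝ) (hδ : 0 < δ) (C : Finset ℂ) (hC : 2 ≤ C.card) (s L K : ℕ)
    (hL : 24 * δ⁻¹ ^ 2 ≤ 3 ^ L) (hK : 24 ≤ δ * K) :
    s * (C.filter (fun w => IsSupported C δ s w)).card ≤ 4 * (K ^ 2 * (2 * L * C.card)) := by
  set S := C.filter (fun w => IsSupported C δ s w) with hS
  have hex : ∀ w : ℂ, ∃ (t : Bool × Bool) (n : ℤ), w ∈ S →
      cell t n w ∈ suppCells C s (cell t (n - L)) (cell t n) ∧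
      δ * 3 ^ n ≤ 12 * isolationRadius C w := by
    intro w
    by_cases hw : w ∈ S
    · obtain ⟨h1, h2⟩ := Finset.mem_filter.1 hw
      obtain ⟨t, n, h⟩ := exists_cell δ hδ C hC s L hL w h1 h2
      exact ⟨t, n, fun _ => h⟩
    · exact ⟨(true, true), 0, fun h => absurd h hw⟩
  choose t n h using hex
  obtain ⟨lo, hlo⟩ := (S.image n).bddBelow
  obtain ⟨hi, hhi⟩ := (S.image n).bddAbove
  have hlo' : ∀ w ∈ S, lo ≤ n w := fun w hw => hlo (Finset.mem_coe.2 (Finset.mem_image_of_mem _ hw))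
  have hhi' : ∀ w ∈ S, n w ≤ hi := fun w hw => hhi (Finset.mem_coe.2 (Finset.mem_image_of_mem _ hw))
  set M : ℕ := (hi - lo + 1).toNat with hM
  have hper : ∀ τ : Bool × Bool, s * (S.filter (fun w => t w = τ)).card ≤
      K ^ 2 * (2 * L * C.card) := by
    intro τ
    let f : ℕ → ℂ → ℤ × ℤ := fun k => cell τ (lo - L + k)
    have hsum := suppCells_sum C s L M f
      (fun q : ℤ × ℤ => ((q.1 + bz τ.1) / 3, (q.2 + bz τ.2) / 3)) (by
        intro k v
        have e : lo - (L : ℤ) + ((k + 1 : ℕ) : ℤ) = lo - L + k + 1 := by push_cast; ring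
        simp only [f]
        rw [e]
        exact cell_succ _ _ _)
    let T : Finset (Σ _ : ℕ, ℤ × ℤ) :=
      (Finset.range M).sigma (fun k => suppCells C s (f k) (f (L + k)))
    have hT : T.card = ∑ k ∈ Finset.range M, (suppCells C s (f k) (f (L + k))).card :=
      Finset.card_sigma _ _
    have hle : (S.filter (fun w => t w = τ)).card ≤ K ^ 2 * T.card := by
      refine Finset.card_le_mul_card_image_of_maps_to
        (f := fun w => (⟨(n w - lo).toNat, cell τ (n w) w⟩ : Σ _ : ℕ, ℤ × ℤ)) ?_ _ ?_
      · intro w hw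
        obtain ⟨hwS, rfl⟩ := Finset.mem_filter.1 hw
        have a1 := hlo' w hwS
        have a2 := hhi' w hwS
        refine Finset.mem_sigma.2 ⟨Finset.mem_range.2 (by simp only; omega), ?_⟩
        have b1 : lo - (L : ℤ) + ((n w - lo).toNat : ℤ) = n w - L := by omega
        have b2 : lo - (L : ℤ) + ((L + (n w - lo).toNat : ℕ) : ℤ) = n w := by omega
        simp only [f]
        rw [b1, b2]
        exact (h w hwS).1
      · rintro ⟨k, q⟩ _
        refine card_in_cell δ C _ ?_ τ (lo + k) q K hK ?_
        · intro w hw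
          exact (Finset.mem_filter.1 (Finset.mem_filter.1 (Finset.mem_filter.1 hw).1).1).1
        · intro w hw
          obtain ⟨hw, he⟩ := Finset.mem_filter.1 hw
          obtain ⟨hwS, rfl⟩ := Finset.mem_filter.1 hw
          simp only [Sigma.mk.injEq, heq_eq_eq] at he
          have a1 := hlo' w hwS
          have b1 : lo + (k : ℤ) = n w := by omega
          rw [b1]
          exact ⟨he.2, (h w hwS).2⟩
    calc s * (S.filter (fun w => t w = τ)).card ≤ s * (K ^ 2 * T.card) := by gcongr
      _ = K ^ 2 * (s * T.card) := by ring
      _ ≤ _ := by rw [hT]; gcongr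
  rw [Finset.card_eq_sum_card_fiberwise (f := t) (t := Finset.univ) (by intro w _; simp),
    Finset.mul_sum]
  calc _ ≤ ∑ τ : Bool × Bool, K ^ 2 * (2 * L * C.card) := Finset.sum_le_sum fun τ _ => hper τ
    _ = _ := by simp [Finset.sum_const]

/-- **The Magic Lemma** (Benjamini–Schramm): at most
`A |C| δ⁻² log (δ⁻¹) / s` points of `C` are `(δ,s)`-supported. -/
theorem magic_lemma :
    ∃ A : ℝ, 0 < A ∧
      ∀ (δ : ℝ), 0 < δ → δ < 1 / 2 →
      ∀ (C : Finset ℂ), 2 ≤ C.card →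
      ∀ s : ℕ, 2 ≤ s →
        ((C.filter (fun w => IsSupported C δ s w)).card : ℝ) ≤
          A * C.card * δ⁻¹ ^ 2 * Real.log δ⁻¹ / s := by
  refine ⟨45000, by norm_num, fun δ hδ hδ2 C hC s hs => ?_⟩
  have hinv : 2 < δ⁻¹ := by
    rw [lt_inv_comm₀ (by norm_num) hδ]; linarith
  have hi0 : 0 < δ⁻¹ := by positivity
  have hlog : Real.log 2 < Real.log δ⁻¹ := Real.log_lt_log (by norm_num) hinv
  have hl2 := Real.log_two_gt_d9
  have hx : Real.log (24 * δ⁻¹ ^ 2) ≤ 7 * Real.log δ⁻¹ := by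
    rw [Real.log_mul (by norm_num) (by positivity), Real.log_pow]
    have : Real.log 24 ≤ Real.log (2 ^ 5) := Real.log_le_log (by norm_num) (by norm_num)
    rw [Real.log_pow] at this
    push_cast at *
    linarith
  set L := ⌈Real.log (24 * δ⁻¹ ^ 2)⌉₊ with hLd
  set K := ⌈24 * δ⁻¹⌉₊ with hKd
  have hx0 : 0 ≤ Real.log (24 * δ⁻¹ ^ 2) := Real.log_nonneg (by nlinarith)
  have hL9 : (L : ℝ) ≤ 9 * Real.log δ⁻¹ := by
    have := Nat.ceil_lt_add_one hx0
    linarith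
  have hL : 24 * δ⁻¹ ^ 2 ≤ 3 ^ L := by
    have h1 : Real.log (24 * δ⁻¹ ^ 2) ≤ L := Nat.le_ceil _
    have h2 : 24 * δ⁻¹ ^ 2 ≤ Real.exp L := by
      rwa [← Real.log_le_iff_le_exp (by positivity)]
    refine h2.trans ?_
    rw [← Real.exp_one_pow]
    gcongr
    linarith [Real.exp_one_lt_d9]
  have hK25 : (K : ℝ) ≤ 25 * δ⁻¹ := by
    have := Nat.ceil_lt_add_one (by positivity : 0 ≤ 24 * δ⁻¹)
    linarith
  have hK : 24 ≤ δ * K := by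
    have h1 : 24 * δ⁻¹ ≤ K := Nat.le_ceil _
    calc (24 : ℝ) = δ * (24 * δ⁻¹) := by field_simp
      _ ≤ _ := by gcongr
  have hmain := count_main δ hδ C hC s L K hL hK
  have hmain' : (s : ℝ) * ((C.filter (fun w => IsSupported C δ s w)).card : ℝ) ≤
      4 * ((K : ℝ) ^ 2 * (2 * L * C.card)) := by exact_mod_cast hmain
  have hs0 : (0 : ℝ) < s := by exact_mod_cast (by omega : 0 < s)
  rw [le_div_iff₀ hs0, mul_comm]
  refine hmain'.trans ?_
  calc 4 * ((K : ℝ) ^ 2 * (2 * L * C.card))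
      ≤ 4 * ((25 * δ⁻¹) ^ 2 * (2 * (9 * Real.log δ⁻¹) * C.card)) := by gcongr
    _ = _ := by ring
end

section
/- Cutset lower bound for flows: Let G=(V,E) be a finite connected simple graph, let a ≠ z be vertices, let θ be a flow from a to z, and let Γ ⊆ E be a cutset separating a from z (every path in G from a to z uses an edge of Γ). Then Σ_{e={x,y} ∈ Γ} |θ(x,y)| ≥ ‖θ‖, the strength of θ. -/
/-!
Cutset lower bound for flows.

`G` is a finite connected simple graph with vertices `a ≠ z`.  A flow from `a`
to `z` is an antisymmetric function `θ : V → V → ℝ` vanishing on non-adjacent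
pairs and satisfying the node law away from `a, z`; since it vanishes off
edges, its strength `∑_{y∼a} θ(a,y)` equals `∑ y, θ a y`.  For an undirected
edge `e = {x,y}` the value `|θ(x,y)| = |θ(y,x)|` is well defined; it is
implemented as `max |θ x y| |θ y x|`, which equals `|θ x y|` for antisymmetric
`θ`.  A cutset `Γ` separating `a` from `z` is a set of edges met by every path
from `a` to `z`.
-/

open Finset

variable {V : Type} [Fintype V] [DecidableEq V]

/-- `θ` is a flow from `a` to `z` in `G`. -/
def IsFlow (G : SimpleGraph V) (a z : V) (θ : V → V → ℝ) : Prop :=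
  (∀ x y, θ x y = -θ y x) ∧
  (∀ x y, ¬G.Adj x y → θ x y = 0) ∧
  (∀ x, x ≠ a → x ≠ z → ∑ y, θ x y = 0)

/-- The absolute value of a flow on an undirected edge. -/
noncomputable def edgeAbs (θ : V → V → ℝ) : Sym2 V → ℝ :=
  Sym2.lift ⟨fun x y => max |θ x y| |θ y x|, fun x y => max_comm _ _⟩

/-- **Cutset lower bound**: the total absolute flow through any cutset
separating `a` from `z` is at least the strength of the flow. -/
theorem cutset_lower_bound (G : SimpleGraph V) (hG : G.Connected)
    (a z : V) (haz : a ≠ z)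
    (θ : V → V → ℝ) (hθ : IsFlow G a z θ)
    (Γ : Finset (Sym2 V)) (hΓ : (Γ : Set (Sym2 V)) ⊆ G.edgeSet)
    (hcut : ∀ p : G.Walk a z, p.IsPath → ∃ e ∈ Γ, e ∈ p.edges) :
    ∑ y, θ a y ≤ ∑ e ∈ Γ, edgeAbs θ e := by
  classical
  obtain ⟨hanti, hadj, hnode⟩ := hθ
  set H := G.deleteEdges (Γ : Set (Sym2 V)) with hH
  set S : Finset V := univ.filter (fun v => H.Reachable a v) with hS
  have haS : a ∈ S := by simp [hS]
  have hzS : z ∉ S := by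
    intro hz
    obtain ⟨p, hp⟩ := ((mem_filter.mp hz).2).exists_isPath
    have hle : H ≤ G := SimpleGraph.deleteEdges_le _
    obtain ⟨e, he, hep⟩ := hcut (p.mapLe hle) (hp.mapLe hle)
    have hep2 : e ∈ p.edges := by simpa using hep
    have h3 := p.edges_subset_edgeSet hep2
    rw [hH, SimpleGraph.edgeSet_deleteEdges] at h3
    exact h3.2 (by exact_mod_cast he)
  have h1 : ∑ x ∈ S, ∑ y, θ x y = ∑ y, θ a y := by
    apply Finset.sum_eq_single_of_mem a haS
    intro x hx hxa
    exact hnode x hxa (fun h => hzS (h ▸ hx))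
  have h2 : ∑ x ∈ S, ∑ y ∈ S, θ x y = 0 := by
    have h : ∑ x ∈ S, ∑ y ∈ S, θ x y = -∑ x ∈ S, ∑ y ∈ S, θ x y := by
      conv_lhs => rw [Finset.sum_comm]
      rw [← Finset.sum_neg_distrib]
      refine Finset.sum_congr rfl fun x _ => ?_
      rw [← Finset.sum_neg_distrib]
      exact Finset.sum_congr rfl fun y _ => hanti y x
    linarith
  have h3 : ∑ y, θ a y = ∑ q ∈ S ×ˢ Sᶜ, θ q.1 q.2 := by
    rw [← h1, Finset.sum_product, ← zero_add (∑ x ∈ S, ∑ y ∈ Sᶜ, θ x y), ← h2,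
      ← Finset.sum_add_distrib]
    exact Finset.sum_congr rfl fun x _ => (Finset.sum_add_sum_compl S _).symm
  have hnn : ∀ e : Sym2 V, 0 ≤ edgeAbs θ e := by
    intro e
    induction e using Sym2.ind with
    | _ x y => exact le_max_of_le_left (abs_nonneg _)
  set T := (S ×ˢ Sᶜ).filter (fun q => s(q.1, q.2) ∈ Γ) with hT
  have h4 : ∑ q ∈ S ×ˢ Sᶜ, θ q.1 q.2 = ∑ q ∈ T, θ q.1 q.2 := by
    symm
    apply Finset.sum_subset (Finset.filter_subset _ _)
    rintro ⟨x, y⟩ hq hqT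
    simp only [mem_product, mem_compl] at hq
    have hnΓ : s(x, y) ∉ Γ := fun h => hqT (by simp [hT, hq, h])
    apply hadj
    intro hxy
    apply hq.2
    have hx := (mem_filter.mp hq.1).2
    have hHxy : H.Adj x y := by
      rw [hH, SimpleGraph.deleteEdges_adj]
      exact ⟨hxy, by exact_mod_cast hnΓ⟩
    exact mem_filter.mpr ⟨mem_univ _, hx.trans hHxy.reachable⟩
  rw [h3, h4]
  calc ∑ q ∈ T, θ q.1 q.2 ≤ ∑ q ∈ T, edgeAbs θ s(q.1, q.2) := by
        refine Finset.sum_le_sum fun q _ => ?_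
        exact (le_abs_self _).trans (le_max_left _ _)
    _ = ∑ e ∈ T.image (fun q => s(q.1, q.2)), edgeAbs θ e := by
        rw [Finset.sum_image]
        rintro ⟨x, y⟩ hq ⟨x', y'⟩ hq' h
        simp only [hT, coe_filter, Set.mem_setOf_eq, mem_product, mem_compl] at hq hq'
        rcases Sym2.eq_iff.mp h with ⟨h, h'⟩ | ⟨h, h'⟩
        · exact Prod.ext h h'
        · exact absurd (show x ∈ S from hq.1.1) (by
            have h5 : x = y' := h
            rw [h5]; exact hq'.1.2)
    _ ≤ ∑ e ∈ Γ, edgeAbs θ e := by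
        apply Finset.sum_le_sum_of_subset_of_nonneg
        · intro e he
          obtain ⟨q, hq, rfl⟩ := Finset.mem_image.mp he
          exact (mem_filter.mp hq).2
        · intro e _ _
          exact hnn e
end

section
/- Recurrence of ℤ² in flow form: Every unit flow from the origin to infinity on the lattice ℤ² has infinite energy. Precisely, if θ : ℤ² × ℤ² → ℝ is antisymmetric (θ(x,y) = −θ(y,x)), vanishes on non-adjacent pairs, satisfies the node law Σ_{y∼x} θ(x,y) = 0 at every vertex x ≠ (0,0), and has strength Σ_{y∼(0,0)} θ((0,0),y) = 1, then the sum Σ over unordered adjacent pairs {x,y} of θ(x,y)² diverges (is not finite). -/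
/-!
Recurrence of `ℤ²` in flow form: every unit flow from the origin to infinity
has infinite energy.

Vertices are points of `ℤ × ℤ`; two vertices are adjacent when
`|x₁−y₁| + |x₂−y₂| = 1`.  Since each vertex has exactly the four neighbours
`x ± (1,0)`, `x ± (0,1)`, the node law `∑_{y∼x} θ(x,y) = 0` is written as the
sum of the four corresponding values.  Each undirected edge appears exactly
once in the family indexed by `(x, b) : (ℤ × ℤ) × Bool`, namely as the edge
from `x` to `x + (1,0)` (for `b = true`) or to `x + (0,1)` (for `b = false`);
the energy of `θ` is the sum of `θ(e)²` over this family, and "the energy is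
infinite" is expressed as the non-summability of this (nonnegative) family.
-/

/-- Adjacency in the lattice `ℤ²`. -/
def ZtwoAdj (x y : ℤ × ℤ) : Prop := |x.1 - y.1| + |x.2 - y.2| = 1

open Finset in
lemma z2_telescope (f : ℤ → ℝ) (n : ℕ) :
    ∑ a ∈ Icc (-(n : ℤ)) n, (f a - f (a - 1)) = f n - f (-(n : ℤ) - 1) := by
  induction n with
  | zero => simp
  | succ k ih =>
    have h : Icc (-((k + 1 : ℕ) : ℤ)) ((k + 1 : ℕ) : ℤ)
        = insert (-(k : ℤ) - 1) (insert ((k : ℤ) + 1) (Icc (-(k : ℤ)) k)) := by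
      ext x
      simp only [mem_insert, mem_Icc]
      push_cast
      omega
    rw [h, sum_insert, sum_insert, ih]
    · have e1 : ((k : ℤ) + 1 - 1) = k := by ring
      have e2 : -((k : ℤ) + 1) - 1 = -(k : ℤ) - 1 - 1 := by ring
      push_cast
      rw [e1, e2]
      ring
    · simp
    · simp only [mem_insert, mem_Icc]
      omega

open Finset in
lemma z2_summable_lines (g : ℤ × ℤ → ℝ) (hg : ∀ p, 0 ≤ g p) (hs : Summable g)
    (φ : ℕ → ℤ) (hφ : Function.Injective φ) :
    Summable (fun n : ℕ => ∑ b ∈ Icc (-(n : ℤ)) n, g (φ n, b)) := by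
  have h1 : Summable (fun p : ℕ × ℤ => g (φ p.1, p.2)) :=
    hs.comp_injective (i := fun p : ℕ × ℤ => (φ p.1, p.2)) (by
      rintro ⟨a, b⟩ ⟨c, d⟩ h
      simp only [Prod.mk.injEq] at h
      rw [hφ h.1, h.2])
  refine Summable.of_nonneg_of_le (fun n => sum_nonneg fun b _ => hg _) (fun n => ?_) h1.prod
  exact (h1.prod_factor n).sum_le_tsum _ (fun b _ => hg _)

open Finset in
lemma z2_flow_aux (h v : ℤ → ℤ → ℝ)
    (hdiv : ∀ a b : ℤ, (h a b - h (a - 1) b) + (v a b - v a (b - 1))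
      = if (a, b) = ((0, 0) : ℤ × ℤ) then 1 else 0)
    (sh : Summable fun p : ℤ × ℤ => h p.1 p.2 ^ 2)
    (sv : Summable fun p : ℤ × ℤ => v p.1 p.2 ^ 2) : False := by
  have sv' : Summable fun p : ℤ × ℤ => v p.2 p.1 ^ 2 :=
    sv.comp_injective (i := Prod.swap) Prod.swap_injective
  have i1 : Function.Injective (fun n : ℕ => (n : ℤ)) := fun a b hab => by
    simpa using hab
  have i2 : Function.Injective (fun n : ℕ => -(n : ℤ) - 1) := fun a b hab => by
    simpa using hab
  have s1 := z2_summable_lines _ (fun p => sq_nonneg _) sh _ i1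
  have s2 := z2_summable_lines _ (fun p => sq_nonneg _) sh _ i2
  have s3 := z2_summable_lines _ (fun p => sq_nonneg _) sv' _ i1
  have s4 := z2_summable_lines _ (fun p => sq_nonneg _) sv' _ i2
  have S := (((s1.add s2).add (s3.add s4)).mul_left 12)
  refine Real.not_summable_one_div_natCast ((summable_nat_add_iff 1).1 ?_)
  refine Summable.of_nonneg_of_le (fun n => by positivity) (fun n => ?_) S
  have flux : (∑ b ∈ Icc (-(n : ℤ)) n, h n b) - (∑ b ∈ Icc (-(n : ℤ)) n, h (-(n : ℤ) - 1) b)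
      + ((∑ a ∈ Icc (-(n : ℤ)) n, v a n) - (∑ a ∈ Icc (-(n : ℤ)) n, v a (-(n : ℤ) - 1))) = 1 := by
    rw [← sum_sub_distrib, ← sum_sub_distrib]
    have e1 : ∀ b, h n b - h (-(n : ℤ) - 1) b
        = ∑ a ∈ Icc (-(n : ℤ)) n, (h a b - h (a - 1) b) :=
      fun b => (z2_telescope (fun a => h a b) n).symm
    have e2 : ∀ a, v a n - v a (-(n : ℤ) - 1)
        = ∑ b ∈ Icc (-(n : ℤ)) n, (v a b - v a (b - 1)) :=
      fun a => (z2_telescope (fun b => v a b) n).symm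
    simp_rw [e1, e2]
    rw [sum_comm, ← sum_add_distrib]
    simp_rw [← sum_add_distrib, hdiv]
    rw [← sum_product' (f := fun a b : ℤ => if (a, b) = ((0, 0) : ℤ × ℤ) then (1 : ℝ) else 0)]
    simp
  have card : ((Icc (-(n : ℤ)) n).card : ℝ) = 2 * n + 1 := by
    have : (Icc (-(n : ℤ)) n).card = 2 * n + 1 := by
      rw [Int.card_Icc]; omega
    rw [this]; push_cast; ring
  have cs : ∀ f : ℤ → ℝ, (∑ b ∈ Icc (-(n : ℤ)) n, f b) ^ 2
      ≤ (2 * n + 1) * ∑ b ∈ Icc (-(n : ℤ)) n, f b ^ 2 := fun f => by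
    rw [← card]; exact sq_sum_le_card_mul_sum_sq
  have c1 := cs (fun b => h n b)
  have c2 := cs (fun b => h (-(n : ℤ) - 1) b)
  have c3 := cs (fun a => v a n)
  have c4 := cs (fun a => v a (-(n : ℤ) - 1))
  have p1 : 0 ≤ ∑ b ∈ Icc (-(n : ℤ)) n, h n b ^ 2 := sum_nonneg fun _ _ => sq_nonneg _
  have p2 : 0 ≤ ∑ b ∈ Icc (-(n : ℤ)) n, h (-(n : ℤ) - 1) b ^ 2 := sum_nonneg fun _ _ => sq_nonneg _
  have p3 : 0 ≤ ∑ a ∈ Icc (-(n : ℤ)) n, v a n ^ 2 := sum_nonneg fun _ _ => sq_nonneg _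
  have p4 : 0 ≤ ∑ a ∈ Icc (-(n : ℤ)) n, v a (-(n : ℤ) - 1) ^ 2 := sum_nonneg fun _ _ => sq_nonneg _
  dsimp only at c1 c2 c3 c4 ⊢
  generalize (∑ b ∈ Icc (-(n : ℤ)) n, h n b) = A at *
  generalize (∑ b ∈ Icc (-(n : ℤ)) n, h (-(n : ℤ) - 1) b) = B at *
  generalize (∑ a ∈ Icc (-(n : ℤ)) n, v a n) = C at *
  generalize (∑ a ∈ Icc (-(n : ℤ)) n, v a (-(n : ℤ) - 1)) = D at *
  generalize (∑ b ∈ Icc (-(n : ℤ)) n, h n b ^ 2) = A2 at *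
  generalize (∑ b ∈ Icc (-(n : ℤ)) n, h (-(n : ℤ) - 1) b ^ 2) = B2 at *
  generalize (∑ a ∈ Icc (-(n : ℤ)) n, v a n ^ 2) = C2 at *
  generalize (∑ a ∈ Icc (-(n : ℤ)) n, v a (-(n : ℤ) - 1) ^ 2) = D2 at *
  have key : 1 ≤ 4 * (A ^ 2 + B ^ 2 + C ^ 2 + D ^ 2) := by
    have : (A - B + (C - D)) ^ 2 = 1 := by rw [flux]; norm_num
    nlinarith [sq_nonneg (A + B), sq_nonneg (A - C), sq_nonneg (A + D), sq_nonneg (B + C),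
      sq_nonneg (B - D), sq_nonneg (C + D)]
  have hn : (0 : ℝ) ≤ n := Nat.cast_nonneg n
  rw [div_le_iff₀ (by positivity)]
  push_cast
  nlinarith [mul_nonneg hn p1, mul_nonneg hn p2, mul_nonneg hn p3, mul_nonneg hn p4]

/-- **Recurrence of `ℤ²`**: every unit flow from the origin to infinity on
`ℤ²` has infinite energy. -/
theorem z2_unit_flow_infinite_energy (θ : ℤ × ℤ → ℤ × ℤ → ℝ)
    (hanti : ∀ x y, θ x y = -θ y x)
    (hsupp : ∀ x y, ¬ZtwoAdj x y → θ x y = 0)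
    (hnode : ∀ x : ℤ × ℤ, x ≠ (0, 0) →
      θ x (x.1 + 1, x.2) + θ x (x.1 - 1, x.2) +
        θ x (x.1, x.2 + 1) + θ x (x.1, x.2 - 1) = 0)
    (hstrength :
      θ (0, 0) (1, 0) + θ (0, 0) (-1, 0) +
        θ (0, 0) (0, 1) + θ (0, 0) (0, -1) = 1) :
    ¬Summable (fun p : (ℤ × ℤ) × Bool =>
      θ p.1 (if p.2 then (p.1.1 + 1, p.1.2) else (p.1.1, p.1.2 + 1)) ^ 2) := by
  intro S
  have st : Function.Injective (fun p : ℤ × ℤ => (p, true)) := fun a b hab => by simpa using hab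
  have sf : Function.Injective (fun p : ℤ × ℤ => (p, false)) := fun a b hab => by simpa using hab
  have sh := S.comp_injective st
  have sv := S.comp_injective sf
  refine z2_flow_aux (fun a b => θ (a, b) (a + 1, b)) (fun a b => θ (a, b) (a, b + 1)) ?_ ?_ ?_
  · intro a b
    have e1 : θ (a - 1, b) (a - 1 + 1, b) = - θ (a, b) (a - 1, b) := by
      rw [sub_add_cancel]; exact hanti _ _
    have e2 : θ (a, b - 1) (a, b - 1 + 1) = - θ (a, b) (a, b - 1) := by
      rw [sub_add_cancel]; exact hanti _ _
    rw [e1, e2]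
    split_ifs with h0
    · simp only [Prod.mk.injEq] at h0
      obtain ⟨rfl, rfl⟩ := h0
      norm_num
      linarith
    · have := hnode (a, b) h0
      dsimp only at this
      linarith
  · simpa [Function.comp_def] using sh
  · simpa [Function.comp_def] using sv
end

section
/- Transience of ℤ³ in flow form: There exists a unit flow from the origin to infinity on the lattice ℤ³ with finite energy. Precisely, there exists an antisymmetric function θ : ℤ³ × ℤ³ → ℝ (θ(x,y) = −θ(y,x)), vanishing on non-adjacent pairs, satisfying the node law Σ_{y∼x} θ(x,y) = 0 at every vertex x ≠ (0,0,0), with strength Σ_{y∼(0,0,0)} θ((0,0,0),y) = 1, and such that the sum over unordered adjacent pairs {x,y} of θ(x,y)² is finite. -/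
/-!
Transience of `ℤ³` in flow form: there is a unit flow from the origin to
infinity with finite energy.

Vertices are points of `ℤ × ℤ × ℤ`; two vertices are adjacent when
`|x₁−y₁| + |x₂−y₂| + |x₃−y₃| = 1`.  Since each vertex has exactly the six
neighbours obtained by changing one coordinate by `±1`, the node law
`∑_{y∼x} θ(x,y) = 0` is written as the sum of the six corresponding values.
Each undirected edge appears exactly once in the family indexed by
`(x, d) : (ℤ × ℤ × ℤ) × Fin 3`, namely as the edge from `x` to `x + e_d`; the
energy of `θ` is the sum of `θ(e)²` over this family, and finiteness of the
energy is expressed as summability of this (nonnegative) family.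
-/

/-- Adjacency in the lattice `ℤ³`. -/
def ZthreeAdj (x y : ℤ × ℤ × ℤ) : Prop :=
  |x.1 - y.1| + |x.2.1 - y.2.1| + |x.2.2 - y.2.2| = 1

/-- The neighbour of `x` in the positive direction `d`. -/
def zstep (x : ℤ × ℤ × ℤ) (d : Fin 3) : ℤ × ℤ × ℤ :=
  if d = 0 then (x.1 + 1, x.2.1, x.2.2)
  else if d = 1 then (x.1, x.2.1 + 1, x.2.2)
  else (x.1, x.2.1, x.2.2 + 1)

/-- Polya urn edge flow through coordinate value `t` out of the vertex `x`. -/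
noncomputable def urnG (t : ℤ) (x : ℤ × ℤ × ℤ) : ℝ :=
  if 0 ≤ x.1 ∧ 0 ≤ x.2.1 ∧ 0 ≤ x.2.2 then
    2 * ((t : ℝ) + 1) / (((x.1 : ℝ) + x.2.1 + x.2.2 + 1) * ((x.1 : ℝ) + x.2.1 + x.2.2 + 2) *
      ((x.1 : ℝ) + x.2.1 + x.2.2 + 3))
  else 0

/-- Oriented version of the flow. -/
noncomputable def urnPhi (x y : ℤ × ℤ × ℤ) : ℝ :=
  if y = (x.1 + 1, x.2.1, x.2.2) then urnG x.1 x
  else if y = (x.1, x.2.1 + 1, x.2.2) then urnG x.2.1 x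
  else if y = (x.1, x.2.1, x.2.2 + 1) then urnG x.2.2 x
  else 0

lemma urnPhi_not_adj (x y : ℤ × ℤ × ℤ) (h : ¬ ZthreeAdj x y) : urnPhi x y = 0 := by
  unfold urnPhi
  split_ifs with h1 h2 h3
  · exact absurd (by subst h1; simp [ZthreeAdj]) h
  · exact absurd (by subst h2; simp [ZthreeAdj]) h
  · exact absurd (by subst h3; simp [ZthreeAdj]) h
  · rfl

lemma adj_symm (x y : ℤ × ℤ × ℤ) (h : ZthreeAdj x y) : ZthreeAdj y x := by
  unfold ZthreeAdj at *
  rw [abs_sub_comm y.1, abs_sub_comm y.2.1, abs_sub_comm y.2.2]; exact h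

lemma urn_node (a b c : ℤ) (h : (a, b, c) ≠ (0, 0, 0)) :
    urnG a (a, b, c) + urnG b (a, b, c) + urnG c (a, b, c)
      - urnG (a - 1) (a - 1, b, c) - urnG (b - 1) (a, b - 1, c)
      - urnG (c - 1) (a, b, c - 1) = 0 := by
  by_cases hn : 0 ≤ a ∧ 0 ≤ b ∧ 0 ≤ c
  · obtain ⟨ha, hb, hc⟩ := hn
    have hpos : 1 ≤ a + b + c := by
      by_contra hlt
      apply h
      have : a = 0 := by omega
      have : b = 0 := by omega
      have : c = 0 := by omega
      simp [*]
    have hposR : (1 : ℝ) ≤ a + b + c := by exact_mod_cast hpos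
    have e1 : urnG (a - 1) (a - 1, b, c) = 2 * (a : ℝ) / (((a : ℝ) + b + c) * ((a : ℝ) + b + c + 1) * ((a : ℝ) + b + c + 2)) := by
      unfold urnG
      split_ifs with h1
      · push_cast; congr 1 <;> ring
      · have : a = 0 := by simp at h1; omega
        simp [this]
    have e2 : urnG (b - 1) (a, b - 1, c) = 2 * (b : ℝ) / (((a : ℝ) + b + c) * ((a : ℝ) + b + c + 1) * ((a : ℝ) + b + c + 2)) := by
      unfold urnG
      split_ifs with h1
      · push_cast; congr 1 <;> ring
      · have : b = 0 := by simp at h1; omega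
        simp [this]
    have e3 : urnG (c - 1) (a, b, c - 1) = 2 * (c : ℝ) / (((a : ℝ) + b + c) * ((a : ℝ) + b + c + 1) * ((a : ℝ) + b + c + 2)) := by
      unfold urnG
      split_ifs with h1
      · push_cast; congr 1 <;> ring
      · have : c = 0 := by simp at h1; omega
        simp [this]
    rw [e1, e2, e3]
    simp only [urnG, ha, hb, hc, and_self, if_true]
    obtain ⟨n, hn⟩ : ∃ n : ℝ, n = a + b + c := ⟨_, rfl⟩
    have ea : (a : ℝ) = n - b - c := by linarith
    rw [← hn] at hposR ⊢
    have : n ≠ 0 := by linarith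
    have : n + 1 ≠ 0 := by linarith
    have : n + 2 ≠ 0 := by linarith
    have : n + 3 ≠ 0 := by linarith
    rw [ea]
    field_simp
    ring
  · have h1 : ¬ (0 ≤ a - 1 ∧ 0 ≤ b ∧ 0 ≤ c) := by omega
    have h2 : ¬ (0 ≤ a ∧ 0 ≤ b - 1 ∧ 0 ≤ c) := by omega
    have h3 : ¬ (0 ≤ a ∧ 0 ≤ b ∧ 0 ≤ c - 1) := by omega
    simp only [urnG, hn, h1, h2, h3, if_false]
    norm_num

/-- One-dimensional weight. -/
noncomputable def urnW (a : ℤ) : ℝ := (1 + |(a : ℝ)|) ^ (-(4 / 3) : ℝ)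

lemma urnW_nonneg (a : ℤ) : 0 ≤ urnW a := by unfold urnW; positivity

lemma urnW_summable : Summable urnW := by
  have hN : Summable (fun n : ℕ => (1 + (n : ℝ)) ^ (-(4 / 3) : ℝ)) := by
    have h := (summable_nat_add_iff 1).2
      (Real.summable_nat_rpow (p := (-(4 / 3) : ℝ)).2 (by norm_num))
    refine h.congr fun n => ?_
    push_cast
    rw [add_comm]
  refine Summable.of_nat_of_neg ?_ ?_
  · simpa [urnW] using hN
  · simpa [urnW] using hN

lemma urnG_sq_le (t : ℤ) (a b c : ℤ) (h : t = a ∨ t = b ∨ t = c) :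
    urnG t (a, b, c) ^ 2 ≤ urnW a * (urnW b * urnW c) * 4 := by
  have w1 := urnW_nonneg a
  have w2 := urnW_nonneg b
  have w3 := urnW_nonneg c
  by_cases hn : 0 ≤ a ∧ 0 ≤ b ∧ 0 ≤ c
  · obtain ⟨ha, hb, hc⟩ := hn
    have ha' : (0 : ℝ) ≤ a := by exact_mod_cast ha
    have hb' : (0 : ℝ) ≤ b := by exact_mod_cast hb
    have hc' : (0 : ℝ) ≤ c := by exact_mod_cast hc
    simp only [urnG, ha, hb, hc, and_self, if_true]
    have ht0 : (0 : ℝ) ≤ t := by rcases h with h | h | h <;> rw [h] <;> assumption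
    have htn : (t : ℝ) ≤ a + b + c := by rcases h with h | h | h <;> rw [h] <;> linarith
    obtain ⟨n, hn⟩ : ∃ n : ℝ, n = a + b + c := ⟨_, rfl⟩
    have hw : ∀ u : ℤ, (0 : ℝ) ≤ u → (u : ℝ) ≤ n → (1 + n) ^ (-(4 / 3) : ℝ) ≤ urnW u := by
      intro u hu hun
      unfold urnW
      rw [abs_of_nonneg hu]
      exact Real.rpow_le_rpow_of_nonpos (by linarith) (by linarith) (by norm_num)
    have wa := hw a ha' (by linarith)
    have wb := hw b hb' (by linarith)
    have wc := hw c hc' (by linarith)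
    rw [← hn] at htn ⊢
    have hn0 : 0 ≤ n := by linarith
    have hq : (0 : ℝ) ≤ (1 + n) ^ (-(4 / 3) : ℝ) := by positivity
    have hcube : (1 + n) ^ (-(4 / 3) : ℝ) * ((1 + n) ^ (-(4 / 3) : ℝ) * (1 + n) ^ (-(4 / 3) : ℝ))
        = ((1 + n) ^ 4)⁻¹ := by
      rw [← Real.rpow_add (by linarith), ← Real.rpow_add (by linarith)]
      norm_num
    have hle : 2 * ((t : ℝ) + 1) / ((n + 1) * (n + 2) * (n + 3)) ≤ 2 / (1 + n) ^ 2 := by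
      rw [div_le_div_iff₀ (by positivity) (by positivity)]
      have : ((t : ℝ) + 1) * (1 + n) ^ 2 ≤ (n + 1) * (1 + n) ^ 2 := by gcongr
      nlinarith [mul_nonneg hn0 hn0]
    calc _ ≤ (2 / (1 + n) ^ 2) ^ 2 := by gcongr
      _ = ((1 + n) ^ 4)⁻¹ * 4 := by field_simp; norm_num
      _ ≤ _ := by rw [← hcube]; gcongr
  · simp only [urnG, hn, if_false]
    rw [zero_pow two_ne_zero]
    exact mul_nonneg (mul_nonneg w1 (mul_nonneg w2 w3)) (by norm_num)

/-- **Transience of `ℤ³`**: there exists a unit flow from the origin to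
infinity on `ℤ³` with finite energy. -/
theorem z3_exists_unit_flow_finite_energy :
    ∃ θ : ℤ × ℤ × ℤ → ℤ × ℤ × ℤ → ℝ,
      (∀ x y, θ x y = -θ y x) ∧
      (∀ x y, ¬ZthreeAdj x y → θ x y = 0) ∧
      (∀ x : ℤ × ℤ × ℤ, x ≠ (0, 0, 0) →
        θ x (x.1 + 1, x.2.1, x.2.2) + θ x (x.1 - 1, x.2.1, x.2.2) +
          θ x (x.1, x.2.1 + 1, x.2.2) + θ x (x.1, x.2.1 - 1, x.2.2) +
          θ x (x.1, x.2.1, x.2.2 + 1) + θ x (x.1, x.2.1, x.2.2 - 1) = 0) ∧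
      (θ (0, 0, 0) (1, 0, 0) + θ (0, 0, 0) (-1, 0, 0) +
        θ (0, 0, 0) (0, 1, 0) + θ (0, 0, 0) (0, -1, 0) +
        θ (0, 0, 0) (0, 0, 1) + θ (0, 0, 0) (0, 0, -1) = 1) ∧
      Summable (fun p : (ℤ × ℤ × ℤ) × Fin 3 => θ p.1 (zstep p.1 p.2) ^ 2) := by
  refine ⟨fun x y => urnPhi x y - urnPhi y x, fun x y => by ring, ?_, ?_, ?_, ?_⟩
  · intro x y h
    simp only
    rw [urnPhi_not_adj x y h, urnPhi_not_adj y x (fun h' => h (adj_symm _ _ h'))]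
    simp
  · rintro ⟨a, b, c⟩ h
    have := urn_node a b c h
    have f1 : ∀ z : ℤ, ¬ (z = z - 1 + 1 + 1) := by intro z; omega
    have f2 : ∀ z : ℤ, ¬ (z - 1 = z + 1) := by intro z; omega
    have f3 : ∀ z : ℤ, ¬ (z = z + 1 + 1) := by intro z; omega
    simp [urnPhi, Prod.ext_iff, f1, f2, f3]
    linarith
  · simp [urnPhi, urnG]
    norm_num
  · have hs : Summable (fun p : (ℤ × ℤ × ℤ) × Fin 3 =>
        (urnW p.1.1 * (urnW p.1.2.1 * urnW p.1.2.2)) * (4 : ℝ)) := by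
      have h2 := urnW_summable.mul_of_nonneg urnW_summable urnW_nonneg urnW_nonneg
      have h3 := urnW_summable.mul_of_nonneg h2 urnW_nonneg
        (fun p => mul_nonneg (urnW_nonneg _) (urnW_nonneg _))
      have h4 : Summable (fun _ : Fin 3 => (4 : ℝ)) := Summable.of_finite
      exact h3.mul_of_nonneg h4
        (fun p => mul_nonneg (urnW_nonneg _) (mul_nonneg (urnW_nonneg _) (urnW_nonneg _)))
        (fun _ => by norm_num)
    refine Summable.of_nonneg_of_le (fun _ => sq_nonneg _) ?_ hs
    rintro ⟨⟨a, b, c⟩, d⟩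
    have f3 : ∀ z : ℤ, ¬ (z = z + 1 + 1) := by intro z; omega
    fin_cases d
    · simpa [urnPhi, zstep, f3] using urnG_sq_le a a b c (by simp)
    · simpa [urnPhi, zstep, f3] using urnG_sq_le b a b c (by simp)
    · simpa [urnPhi, zstep, f3] using urnG_sq_le c a b c (by simp)
end

section
/- Counting supported squares in nested grids: Let k ≥ 3 be an integer, and for each n ∈ ℤ let G_n be the tiling of ℝ² by the half-open squares [k^n·i, k^n·(i+1)) × [k^n·j, k^n·(j+1)) for i,j ∈ ℤ (so each square of G_n is the disjoint union of k² squares of G_{n−1}). Let C ⊆ ℝ² be a finite set and s ≥ 2 an integer. Call a square S ∈ G_n s-supported if for every square S' ∈ G_{n−1} with S' ⊆ S one has |C ∩ (S ∖ S')| ≥ s. Then the total number of s-supported squares, summed over all n ∈ ℤ and all S ∈ G_n, is at most 2|C|/s (in particular it is finite). -/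
/-!
Counting supported squares in nested grids.

For an integer `k ≥ 3` and `n i j : ℤ`, `gridSquare k n i j` is the half-open
square `[kⁿ i, kⁿ (i+1)) × [kⁿ j, kⁿ (j+1)) ⊆ ℝ²`; the squares of level `n`
tile the plane and each is the disjoint union of `k²` squares of level `n−1`.
For a finite set `C ⊆ ℝ²` and an integer `s ≥ 2`, a level-`n` square `S` is
`s`-supported if `|C ∩ (S ∖ S')| ≥ s` for every level-`(n−1)` square
`S' ⊆ S`.  The claim: the total number of `s`-supported squares over all
levels `n ∈ ℤ` is finite and at most `2|C|/s`.
-/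

/-- The half-open grid square of level `n` at position `(i,j)`. -/
def gridSquare (k : ℤ) (n i j : ℤ) : Set (ℝ × ℝ) :=
  Set.Ico ((k : ℝ) ^ n * i) ((k : ℝ) ^ n * (i + 1)) ×ˢ
    Set.Ico ((k : ℝ) ^ n * j) ((k : ℝ) ^ n * (j + 1))

/-- The level-`n` square at `(i,j)` is `s`-supported for the point set `C`. -/
def IsSupportedSquare (k : ℤ) (C : Set (ℝ × ℝ)) (s : ℕ) (n i j : ℤ) : Prop :=
  ∀ i' j' : ℤ, gridSquare k (n - 1) i' j' ⊆ gridSquare k n i j →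
    s ≤ Nat.card ↥(C ∩ (gridSquare k n i j \ gridSquare k (n - 1) i' j'))

open Finset in
/-- One level of the potential argument, iterated over all levels. -/
theorem abstract_count {P X : Type*} [DecidableEq P] [DecidableEq X] (C : Finset P)
    (a : ℕ → P → X) (par : X → X) (hpar : ∀ n p, a (n + 1) p = par (a n p))
    (hsurj : Function.Surjective par) (s : ℕ) (F : ℕ → Finset X) (hF0 : F 0 = ∅)
    (hsup : ∀ n, ∀ x ∈ F (n + 1), ∀ y, par y = x →
      s ≤ #{p ∈ C | a (n + 1) p = x ∧ a n p ≠ y}) (n : ℕ) :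
    ∃ U : Finset X, s * (∑ m ∈ range (n + 1), #(F m)) + s * #U ≤ 2 * #{p ∈ C | a n p ∈ U} := by
  induction n with
  | zero => exact ⟨∅, by simp [hF0]⟩
  | succ n ih =>
    obtain ⟨U, hU⟩ := ih
    refine ⟨U.image par ∪ F (n + 1), ?_⟩
    set V := U.image par ∪ F (n + 1) with hV
    set D := {p ∈ C | a (n + 1) p ∈ V ∧ a n p ∉ U} with hD
    have h1 : #{p ∈ C | a (n + 1) p ∈ V} = #{p ∈ C | a n p ∈ U} + #D := by
      rw [← card_union_of_disjoint]
      · congr 1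
        ext p
        have : a n p ∈ U → a (n + 1) p ∈ V := by
          intro h
          rw [hpar, hV]
          exact mem_union_left _ (mem_image_of_mem _ h)
        simp only [hD, mem_filter, mem_union]
        tauto
      · rw [Finset.disjoint_left]
        intro p hp hp'
        simp only [hD, mem_filter] at hp hp'
        exact hp'.2.2 hp.2
    have h2 : #U = ∑ x ∈ V, #{y ∈ U | par y = x} :=
      card_eq_sum_card_fiberwise (fun y hy => by
        rw [hV]
        exact mem_coe.2 (mem_union_left _ (mem_image_of_mem _ hy)))
    have h3 : #D = ∑ x ∈ V, #{p ∈ D | a (n + 1) p = x} :=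
      card_eq_sum_card_fiberwise (fun p hp => by
        simp only [hD, coe_filter, Set.mem_ofPred_eq] at hp
        exact hp.2.1)
    have h4 : #(F (n + 1)) = ∑ x ∈ V, if x ∈ F (n + 1) then 1 else 0 := by
      rw [← card_filter]
      congr 1
      ext x
      simp only [hV, mem_filter, mem_union]
      tauto
    have key : s * #(F (n + 1)) + s * #V ≤ 2 * #D + s * #U := by
      rw [h2, h3, h4, card_eq_sum_ones V]
      simp only [mul_sum, ← sum_add_distrib]
      apply sum_le_sum
      intro x hx
      have hnew : x ∈ F (n + 1) → #{y ∈ U | par y = x} ≤ 1 →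
          s ≤ #{p ∈ D | a (n + 1) p = x} := by
        intro hxF hc
        have : ∃ y, par y = x ∧ ∀ z ∈ U, par z = x → z = y := by
          rw [card_le_one] at hc
          by_cases h : ∃ y ∈ U, par y = x
          · obtain ⟨y, hy, hyx⟩ := h
            refine ⟨y, hyx, fun z hz hzx => hc z ?_ y ?_⟩ <;> simp [*]
          · obtain ⟨y, hy⟩ := hsurj x
            exact ⟨y, hy, fun z hz hzx => absurd ⟨z, hz, hzx⟩ h⟩
        obtain ⟨y, hy, hz⟩ := this
        refine (hsup n x hxF y hy).trans (card_le_card ?_)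
        intro p hp
        simp only [hD, mem_filter] at hp ⊢
        refine ⟨⟨hp.1, hp.2.1 ▸ hx, fun h => hp.2.2 (hz _ h ?_)⟩, hp.2.1⟩
        rw [← hpar, hp.2.1]
      have hold : x ∉ F (n + 1) → 1 ≤ #{y ∈ U | par y = x} := by
        intro h
        rw [hV, mem_union, mem_image] at hx
        obtain ⟨y, hy, hyx⟩ := hx.resolve_right h
        exact card_pos.2 ⟨y, by simp [hy, hyx]⟩
      generalize #{y ∈ U | par y = x} = t at *
      generalize #{p ∈ D | a (n + 1) p = x} = d at *
      by_cases hxF : x ∈ F (n + 1)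
      · simp only [hxF, if_true]
        rcases Nat.lt_or_ge t 2 with ht | ht
        · have := hnew hxF (by omega)
          nlinarith [Nat.zero_le (s * t)]
        · nlinarith
      · simp only [hxF, if_false]
        have := hold hxF
        nlinarith
    rw [sum_range_succ, mul_add, h1]
    linarith

/-- Position of the level `n` square containing `p`. -/
noncomputable def cellOf (k n : ℤ) (p : ℝ × ℝ) : ℤ × ℤ :=
  (⌊p.1 / (k : ℝ) ^ n⌋, ⌊p.2 / (k : ℝ) ^ n⌋)

theorem mem_gridSquare_iff (k : ℤ) (hk : 3 ≤ k) (n i j : ℤ) (p : ℝ × ℝ) :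
    p ∈ gridSquare k n i j ↔ cellOf k n p = (i, j) := by
  have hk' : (0 : ℝ) < (k : ℝ) ^ n := by
    have : (0 : ℝ) < k := by exact_mod_cast (by omega : 0 < k)
    positivity
  simp only [gridSquare, cellOf, Set.mem_prod, Set.mem_Ico, Prod.mk.injEq, Int.floor_eq_iff,
    le_div_iff₀ hk', div_lt_iff₀ hk', mul_comm]

theorem floor_div_int (k : ℤ) (hk : 3 ≤ k) (x : ℝ) : ⌊x / (k : ℝ)⌋ = ⌊x⌋ / k := by
  have hk' : (0 : ℝ) < (k : ℝ) := by exact_mod_cast (by omega : 0 < k)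
  apply le_antisymm
  · rw [Int.le_ediv_iff_mul_le (by omega), Int.le_floor]
    push_cast
    rw [← le_div_iff₀ hk']
    exact Int.floor_le _
  · rw [Int.le_floor, le_div_iff₀ hk']
    refine le_trans ?_ (Int.floor_le x)
    exact_mod_cast Int.ediv_mul_le _ (by omega)

theorem cellOf_succ (k : ℤ) (hk : 3 ≤ k) (n : ℤ) (p : ℝ × ℝ) :
    cellOf k (n + 1) p = ((cellOf k n p).1 / k, (cellOf k n p).2 / k) := by
  have hk' : (k : ℝ) ≠ 0 := by exact_mod_cast (by omega : k ≠ 0)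
  simp only [cellOf, zpow_add_one₀ hk', ← div_div, floor_div_int k hk]

open Finset in
theorem finset_count (k : ℤ) (hk : 3 ≤ k) (C : Finset (ℝ × ℝ)) (s : ℕ)
    (F : Finset (ℤ × ℤ × ℤ))
    (hF : ∀ q ∈ F, IsSupportedSquare k (C : Set (ℝ × ℝ)) s q.1 q.2.1 q.2.2) :
    s * #F ≤ 2 * #C := by
  classical
  obtain ⟨B, hB⟩ : ∃ B : ℕ, ∀ q ∈ F, q.1.natAbs < B :=
    ⟨F.sup (fun q => q.1.natAbs) + 1, fun q hq =>
      Nat.lt_succ_of_le (le_sup (f := fun q : ℤ × ℤ × ℤ => q.1.natAbs) hq)⟩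
  let G : ℕ → Finset (ℤ × ℤ) := fun m => (F.filter (fun q => (q.1 + (B : ℤ)).toNat = m)).image (fun q => q.2)
  have hG : ∀ m x, x ∈ G m → ((m : ℤ) - B, x) ∈ F := by
    intro m x hx
    simp only [G, mem_image, mem_filter] at hx
    obtain ⟨q, ⟨hq, hm⟩, rfl⟩ := hx
    have := hB q hq
    have e : (m : ℤ) - B = q.1 := by omega
    rw [e]
    exact hq
  obtain ⟨U, hU⟩ := abstract_count C (fun n p => cellOf k ((n : ℤ) - B) p)
    (fun x => (x.1 / k, x.2 / k))
    (by
      intro n p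
      rw [← cellOf_succ k hk]
      congr 1
      push_cast
      ring)
    (by
      rintro ⟨i, j⟩
      refine ⟨(i * k, j * k), ?_⟩
      simp [Int.mul_ediv_cancel _ (by omega : k ≠ 0)])
    s G
    (by
      rw [eq_empty_iff_forall_notMem]
      intro x hx
      have h1 := hG 0 x hx
      have h2 := hB _ h1
      simp at h2)
    (by
      rintro n ⟨i, j⟩ hx ⟨i', j'⟩ hy
      have h1 := hF _ (hG _ _ hx) i' j'
      have e : (((n + 1 : ℕ) : ℤ) - B) = ((n : ℤ) - B) + 1 := by
        push_cast
        ring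
      simp only [e, add_sub_cancel_right] at h1
      have h2 := h1 (by
        intro p hp
        rw [mem_gridSquare_iff k hk] at hp ⊢
        rw [cellOf_succ k hk, hp]
        exact hy)
      refine h2.trans (le_of_eq ?_)
      rw [← Nat.card_eq_finsetCard]
      refine Nat.card_congr (Equiv.setCongr ?_)
      ext p
      simp only [Set.mem_inter_iff, Set.mem_sdiff, mem_gridSquare_iff k hk, SetLike.mem_coe,
        coe_filter, mem_filter, Set.mem_ofPred_eq, e, ne_eq])
    (2 * B)
  have hcard : #F = ∑ m ∈ range (2 * B + 1), #(G m) := by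
    rw [card_eq_sum_card_fiberwise (f := fun q : ℤ × ℤ × ℤ => (q.1 + B).toNat)
      (t := range (2 * B + 1))]
    · refine sum_congr rfl fun m _ => ?_
      rw [card_image_of_injOn]
      rintro ⟨a, x⟩ ha ⟨b, y⟩ hb hxy
      simp only [coe_filter, Set.mem_ofPred_eq] at ha hb hxy
      have h1 := hB _ ha.1
      have h2 := hB _ hb.1
      simp only at h1 h2
      have : a = b := by omega
      rw [this, hxy]
    · intro q hq
      have := hB q hq
      simp only [coe_range, Set.mem_Iio]
      omega
  rw [← hcard] at hU
  have := card_filter_le C (fun p => cellOf k (((2 * B : ℕ) : ℤ) - B) p ∈ U)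
  have h0 := Nat.zero_le (s * #U)
  omega

/-- **Counting supported squares**: for `k ≥ 3` and `s ≥ 2`, the number of
`s`-supported squares, over all levels `n ∈ ℤ` and positions `(i,j) ∈ ℤ²`,
is at most `2|C|/s`; in particular it is finite. -/
theorem supported_squares_count (k : ℤ) (hk : 3 ≤ k)
    (C : Set (ℝ × ℝ)) (hC : C.Finite) (s : ℕ) (hs : 2 ≤ s) :
    {q : ℤ × ℤ × ℤ | IsSupportedSquare k C s q.1 q.2.1 q.2.2}.Finite ∧
    (Nat.card {q : ℤ × ℤ × ℤ | IsSupportedSquare k C s q.1 q.2.1 q.2.2} : ℝ) ≤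
      2 * (Nat.card ↥C : ℝ) / s := by
  have hs0 : 0 < s := by omega
  have key : ∀ F : Finset (ℤ × ℤ × ℤ),
      (F : Set (ℤ × ℤ × ℤ)) ⊆ {q | IsSupportedSquare k C s q.1 q.2.1 q.2.2} →
      s * F.card ≤ 2 * Nat.card ↥C := by
    intro F hF
    have h := finset_count k hk hC.toFinset s F (fun q hq => by
      rw [hC.coe_toFinset]
      exact hF hq)
    rwa [← Nat.card_eq_card_finite_toFinset hC] at h
  have hfin : {q : ℤ × ℤ × ℤ | IsSupportedSquare k C s q.1 q.2.1 q.2.2}.Finite := by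
    by_contra hinf
    obtain ⟨F, hF, hcard⟩ := Set.Infinite.exists_subset_card_eq hinf (2 * Nat.card ↥C + 1)
    have h := key F hF
    rw [hcard] at h
    nlinarith
  refine ⟨hfin, ?_⟩
  have h := key hfin.toFinset (by simp)
  rw [← Nat.card_eq_card_finite_toFinset hfin] at h
  rw [le_div_iff₀ (by exact_mod_cast hs0), mul_comm]
  exact_mod_cast h
end

section
/- Ohm's law / well-definedness of effective resistance: Let G=(V,E) be a finite network with positive conductances c_{xy} and let a ≠ z be vertices. Then there exists a constant R > 0 such that every voltage h (i.e., every function h : V → ℝ harmonic at all vertices x ∉ {a,z}) satisfies h(z) − h(a) = R · ‖θ_h‖, where θ_h(x,y) = c_{xy}(h(y) − h(x)) is the current flow associated with h and ‖θ_h‖ = Σ_{y∼a} θ_h(a,y) is its strength. In particular, for every non-constant voltage h the strength ‖θ_h‖ is nonzero and the ratio (h(z)−h(a))/‖θ_h‖ equals the same positive constant R. -/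
/-!
Ohm's law / well-definedness of effective resistance.

The finite network is a finite connected simple graph `G` with symmetric
conductances `c : V → V → ℝ`, positive on edges and (by convention) zero on
non-adjacent pairs, so that sums over all vertices agree with sums over
neighbours.  A voltage (with poles `a, z`) is a function `h : V → ℝ` harmonic
at every `x ∉ {a, z}`, i.e. `(∑_{y∼x} c_{xy}) · h x = ∑_{y∼x} c_{xy} · h y`.
The current flow of `h` is `θ_h(x,y) = c_{xy} (h y − h x)` and its strength is
`‖θ_h‖ = ∑_{y∼a} θ_h(a,y) = ∑ y, c a y * (h y − h a)`.
-/

open Finset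

variable {V : Type} [Fintype V] [DecidableEq V]

/-- `h` is a voltage with poles `a, z`: harmonic at every other vertex. -/
def IsVoltage (c : V → V → ℝ) (a z : V) (h : V → ℝ) : Prop :=
  ∀ x : V, x ≠ a → x ≠ z → (∑ y, c x y) * h x = ∑ y, c x y * h y

lemma energy_eq (c : V → V → ℝ) (hsymm : ∀ x y, c x y = c y x) (a z : V) (haz : a ≠ z)
    (g h : V → ℝ) (hh : IsVoltage c a z h) :
    ∑ x, ∑ y, c x y * (g y - g x) * (h y - h x)
      = 2 * ((g z - g a) * ∑ y, c a y * (h y - h a)) := by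
  -- Green identity
  have green : ∀ f : V → ℝ, ∑ x, ∑ y, c x y * (f y - f x) * (h y - h x)
      = -2 * ∑ x, f x * ∑ y, c x y * (h y - h x) := by
    intro f
    have h1 : ∑ x, ∑ y, c x y * (f y) * (h y - h x)
        = ∑ x, ∑ y, -(c x y * f x * (h y - h x)) := by
      rw [Finset.sum_comm]
      refine Finset.sum_congr rfl fun x _ => Finset.sum_congr rfl fun y _ => ?_
      rw [hsymm y x]; ring
    have h2 : ∑ x, ∑ y, c x y * (f y - f x) * (h y - h x)
        = ∑ x, ∑ y, c x y * (f y) * (h y - h x) + ∑ x, ∑ y, -(c x y * f x * (h y - h x)) := by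
      simp only [← Finset.sum_add_distrib]
      refine Finset.sum_congr rfl fun x _ => Finset.sum_congr rfl fun y _ => ?_
      ring
    rw [h2, h1, ← two_mul]
    simp only [Finset.mul_sum]
    refine Finset.sum_congr rfl fun x _ => Finset.sum_congr rfl fun y _ => ?_
    ring
  -- the net flow vanishes away from the poles
  have lap : ∀ f : V → ℝ, ∑ x, f x * ∑ y, c x y * (h y - h x)
      = f a * ∑ y, c a y * (h y - h a) + f z * ∑ y, c z y * (h y - h z) := by
    intro f
    refine Finset.sum_eq_add a z haz (fun x _ hx => ?_) (by simp) (by simp)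
    have := hh x hx.1 hx.2
    have h0 : ∑ y, c x y * (h y - h x) = 0 := by
      simp only [mul_sub, Finset.sum_sub_distrib, ← Finset.sum_mul]
      linarith
    rw [h0, mul_zero]
  have hg := green g
  rw [lap] at hg
  have h1 := green (fun _ => 1)
  rw [lap] at h1
  simp at h1
  have hz : ∑ y, c z y * (h y - h z) = -∑ y, c a y * (h y - h a) := by linarith
  rw [hg, hz]; ring

lemma const_of_energy (G : SimpleGraph V) (hG : G.Connected)
    (c : V → V → ℝ) (hpos : ∀ x y, G.Adj x y → 0 < c x y)
    (hzero : ∀ x y, ¬G.Adj x y → c x y = 0) (h : V → ℝ)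
    (hE : ∑ x, ∑ y, c x y * (h y - h x) * (h y - h x) ≤ 0) : ∀ u v, h u = h v := by
  have hnn : ∀ x y, 0 ≤ c x y * (h y - h x) * (h y - h x) := by
    intro x y
    have hc : 0 ≤ c x y := by
      by_cases hxy : G.Adj x y
      · exact (hpos x y hxy).le
      · rw [hzero x y hxy]
    rw [mul_assoc]
    exact mul_nonneg hc (mul_self_nonneg _)
  have hE0 := le_antisymm hE (Finset.sum_nonneg fun x _ => Finset.sum_nonneg fun y _ => hnn x y)
  have hadj : ∀ x y, G.Adj x y → h x = h y := by
    intro x y hxy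
    have h1 := (Finset.sum_eq_zero_iff_of_nonneg
      (fun x _ => Finset.sum_nonneg fun y _ => hnn x y)).1 hE0 x (Finset.mem_univ x)
    have h2 := (Finset.sum_eq_zero_iff_of_nonneg (fun y _ => hnn x y)).1 h1 y (Finset.mem_univ y)
    have := (hpos x y hxy).ne'
    simp [this] at h2
    linarith
  intro u v
  obtain ⟨p⟩ := hG.preconnected u v
  induction p with
  | nil => rfl
  | cons e _ ih => exact (hadj _ _ e).trans ih

/-- **Ohm's law**: there is a positive constant `R` (the effective resistance)
such that every voltage `h` satisfies `h z − h a = R · ‖θ_h‖`; in particular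
every non-constant voltage has nonzero current strength. -/
theorem ohm_law (G : SimpleGraph V) (hG : G.Connected)
    (c : V → V → ℝ) (hsymm : ∀ x y, c x y = c y x)
    (hpos : ∀ x y, G.Adj x y → 0 < c x y)
    (hzero : ∀ x y, ¬G.Adj x y → c x y = 0)
    (a z : V) (haz : a ≠ z) :
    ∃ R : ℝ, 0 < R ∧
      (∀ h : V → ℝ, IsVoltage c a z h →
        h z - h a = R * ∑ y, c a y * (h y - h a)) ∧
      (∀ h : V → ℝ, IsVoltage c a z h → ¬(∀ u v, h u = h v) →
        ∑ y, c a y * (h y - h a) ≠ 0) := by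
  have key : ∀ h : V → ℝ, IsVoltage c a z h → ¬(∀ u v, h u = h v) →
      0 < (h z - h a) * ∑ y, c a y * (h y - h a) := by
    intro h hh hn
    by_contra hle
    refine hn (const_of_energy G hG c hpos hzero h ?_)
    rw [energy_eq c hsymm a z haz h h hh]
    linarith
  have hne : ∀ h : V → ℝ, IsVoltage c a z h → ¬(∀ u v, h u = h v) →
      ∑ y, c a y * (h y - h a) ≠ 0 := by
    intro h hh hn h0
    have := key h hh hn
    rw [h0, mul_zero] at this
    exact lt_irrefl _ this
  by_cases hex : ∃ g : V → ℝ, IsVoltage c a z g ∧ ¬(∀ u v, g u = g v)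
  · obtain ⟨g, hg, hgn⟩ := hex
    have hS := hne g hg hgn
    refine ⟨(g z - g a) / ∑ y, c a y * (g y - g a), ?_, fun h hh => ?_, hne⟩
    · have := div_pos (key g hg hgn) (pow_pos (abs_pos.2 hS) 2)
      rw [sq_abs, sq, mul_div_mul_right _ _ hS] at this
      exact this
    · have e1 := energy_eq c hsymm a z haz g h hh
      have e2 := energy_eq c hsymm a z haz h g hg
      have e3 : ∑ x, ∑ y, c x y * (g y - g x) * (h y - h x)
          = ∑ x, ∑ y, c x y * (h y - h x) * (g y - g x) :=
        Finset.sum_congr rfl fun x _ => Finset.sum_congr rfl fun y _ => by ring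
      rw [div_mul_eq_mul_div, eq_div_iff hS]
      linarith
  · push Not at hex
    refine ⟨1, one_pos, fun h hh => ?_, hne⟩
    have hc := hex h hh
    have : ∀ y, h y = h a := fun y => hc y a
    simp [this]
end
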